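/- Let (X, f_{1,∞}) be a periodic non-autonomous system on a compact Hausdorff uniform space whose induced autonomous map g has a transitive point. Then (X, f_{1,∞}) is either equicontinuous or eventually sensitive. -/

import Mathlib

open Topology Filter Set
open scoped Uniformity

/-- `traj f n = f_n ∘ ⋯ ∘ f_1` (and `traj f 0 = id`), i.e. `f_1^n`. -/
def traj {X : Type*} (f : ℕ → X → X) : ℕ → X → X
  | 0 => id
  | n + 1 => f (n + 1) ∘ traj f n

/-- The family `f` is periodic with period `p`. -/
def PeriodicFam {X : Type*} (f : ℕ → X → X) (p : ℕ) : Prop :=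
  ∀ n, f (n + p) = f n

/-- A set of naturals is thick: it contains arbitrarily long blocks of consecutive integers. -/
def Thick (T : Set ℕ) : Prop :=
  ∀ k : ℕ, ∃ n : ℕ, ∀ i ≤ k, n + i ∈ T

/-- A set of naturals is syndetic: it has bounded gaps. -/
def Syndetic (S : Set ℕ) : Prop :=
  ∃ M : ℕ, ∀ n : ℕ, ∃ m ∈ S, n ≤ m ∧ m ≤ n + M

/-- `x` is a transitive point of the non-autonomous system `(X, f_{1,∞})`. -/
def TransPt {X : Type*} [TopologicalSpace X] (f : ℕ → X → X) (x : X) : Prop :=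
  Dense (Set.range fun n => traj f n x)

/-- `x` is a transitive point of the autonomous system `(X, g)`. -/
def TransPtAut {X : Type*} [TopologicalSpace X] (g : X → X) (x : X) : Prop :=
  Dense (Set.range fun n => g^[n] x)

/-- `x` is an equicontinuity point of `(X, f_{1,∞})` on a uniform space. -/
def EqPt {X : Type*} [UniformSpace X] (f : ℕ → X → X) (x : X) : Prop :=
  ∀ E ∈ 𝓤 X, ∃ D ∈ 𝓤 X, ∀ y : X, (x, y) ∈ D → ∀ n : ℕ, (traj f n x, traj f n y) ∈ E

/-- `x` is a syndetically equicontinuous point of `(X, f_{1,∞})`. -/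
def SynEqPt {X : Type*} [UniformSpace X] (f : ℕ → X → X) (x : X) : Prop :=
  ∀ E ∈ 𝓤 X, ∃ U ∈ 𝓝 x,
    Syndetic {n : ℕ | ∀ x₁ ∈ U, ∀ x₂ ∈ U, (traj f n x₁, traj f n x₂) ∈ E}

/-- `x` is a syndetically equicontinuous point of the autonomous system `(X, g)`. -/
def SynEqPtAut {X : Type*} [UniformSpace X] (g : X → X) (x : X) : Prop :=
  ∀ E ∈ 𝓤 X, ∃ U ∈ 𝓝 x,
    Syndetic {n : ℕ | ∀ x₁ ∈ U, ∀ x₂ ∈ U, (g^[n] x₁, g^[n] x₂) ∈ E}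

/-- `N(U, D)` for the non-autonomous system. -/
def NSet {X : Type*} (f : ℕ → X → X) (U : Set X) (D : Set (X × X)) : Set ℕ :=
  {n : ℕ | 0 < n ∧ ∃ x ∈ U, ∃ y ∈ U, (traj f n x, traj f n y) ∉ D}

/-- `N(U, D)` for the autonomous system. -/
def NSetAut {X : Type*} (g : X → X) (U : Set X) (D : Set (X × X)) : Set ℕ :=
  {n : ℕ | 0 < n ∧ ∃ x ∈ U, ∃ y ∈ U, (g^[n] x, g^[n] y) ∉ D}

/-- Sensitivity of `(X, f_{1,∞})`. -/
def Sensitive {X : Type*} [UniformSpace X] (f : ℕ → X → X) : Prop :=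
  ∃ D ∈ 𝓤 X, ∀ U : Set X, IsOpen U → U.Nonempty → (NSet f U D).Nonempty

/-- Thick sensitivity of `(X, f_{1,∞})`. -/
def ThickSensitive {X : Type*} [UniformSpace X] (f : ℕ → X → X) : Prop :=
  ∃ D ∈ 𝓤 X, ∀ U : Set X, IsOpen U → U.Nonempty → Thick (NSet f U D)

/-- Thick sensitivity of the autonomous system `(X, g)`. -/
def ThickSensitiveAut {X : Type*} [UniformSpace X] (g : X → X) : Prop :=
  ∃ D ∈ 𝓤 X, ∀ U : Set X, IsOpen U → U.Nonempty → Thick (NSetAut g U D)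

/-- Multi-sensitivity of `(X, f_{1,∞})`. -/
def MultiSensitive {X : Type*} [UniformSpace X] (f : ℕ → X → X) : Prop :=
  ∃ D ∈ 𝓤 X, ∀ (k : ℕ) (U : Fin (k + 1) → Set X),
    (∀ i, IsOpen (U i)) → (∀ i, (U i).Nonempty) → (⋂ i, NSet f (U i) D).Nonempty

/-- Multi-sensitivity of the autonomous system `(X, g)`. -/
def MultiSensitiveAut {X : Type*} [UniformSpace X] (g : X → X) : Prop :=
  ∃ D ∈ 𝓤 X, ∀ (k : ℕ) (U : Fin (k + 1) → Set X),
    (∀ i, IsOpen (U i)) → (∀ i, (U i).Nonempty) → (⋂ i, NSetAut g (U i) D).Nonempty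

/-- Eventual sensitivity of `(X, f_{1,∞})` with a given entourage `D`. -/
def EvSensitiveWith {X : Type*} [UniformSpace X] (f : ℕ → X → X) (D : Set (X × X)) : Prop :=
  ∀ x : X, ∀ E ∈ 𝓤 X, ∃ n k : ℕ, 0 < n ∧ 0 < k ∧
    ∃ y : X, (traj f n x, y) ∈ E ∧ (traj f (n + k) x, traj f k y) ∉ D

/-- Eventual sensitivity of `(X, f_{1,∞})`. -/
def EvSensitive {X : Type*} [UniformSpace X] (f : ℕ → X → X) : Prop :=
  ∃ D ∈ 𝓤 X, EvSensitiveWith f D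

/-- Eventual sensitivity of the autonomous system `(X, g)` with entourage `D`. -/
def EvSensitiveAutWith {X : Type*} [UniformSpace X] (g : X → X) (D : Set (X × X)) : Prop :=
  ∀ x : X, ∀ E ∈ 𝓤 X, ∃ q k : ℕ, 0 < q ∧ 0 < k ∧
    ∃ y : X, (g^[q] x, y) ∈ E ∧ (g^[q + k] x, g^[k] y) ∉ D

/-- `(x, y)` is a (topological) equicontinuity pair for `(X, f_{1,∞})`. -/
def EqPair {X : Type*} [TopologicalSpace X] (f : ℕ → X → X) (x y : X) : Prop :=
  ∀ O ∈ 𝓝 y, ∃ U ∈ 𝓝 x, ∃ V ∈ 𝓝 y, ∀ n : ℕ, 0 < n →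
    ((traj f n '' U) ∩ V).Nonempty → traj f n '' U ⊆ O

/-- `(x, y)` is a syndetic equicontinuity pair for `(X, f_{1,∞})`. -/
def SynEqPair {X : Type*} [TopologicalSpace X] (f : ℕ → X → X) (x y : X) : Prop :=
  ∀ O ∈ 𝓝 y, ∃ U ∈ 𝓝 x, ∃ V ∈ 𝓝 y,
    Syndetic {n : ℕ | ((traj f n '' U) ∩ V).Nonempty → traj f n '' U ⊆ O}

/-- `O` is a splitting neighborhood of `y` with respect to `x`. -/
def SplittingNbhd {X : Type*} [TopologicalSpace X] (f : ℕ → X → X) (x y : X) (O : Set X) :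
    Prop :=
  O ∈ 𝓝 y ∧ ∀ U ∈ 𝓝 x, ∀ V ∈ 𝓝 y, ∃ n : ℕ, 0 < n ∧
    ((traj f n '' U) ∩ V).Nonempty ∧ ¬ traj f n '' U ⊆ O

/-- A finite open cover of `X`. -/
def IsFinOpenCover {X : Type*} [TopologicalSpace X] (𝒰 : Finset (Set X)) : Prop :=
  (∀ U ∈ 𝒰, IsOpen U) ∧ ⋃₀ (↑𝒰 : Set (Set X)) = Set.univ

/-- `N(V, 𝒰)`: times at which `f_1^n(V)` is not contained in any single member of `𝒰`. -/
def HNSet {X : Type*} (f : ℕ → X → X) (V : Set X) (𝒰 : Finset (Set X)) : Set ℕ :=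
  {n : ℕ | 0 < n ∧ ∀ U ∈ 𝒰, ¬ traj f n '' V ⊆ U}

/-- `N(V, 𝒰)` for the autonomous system. -/
def HNSetAut {X : Type*} (g : X → X) (V : Set X) (𝒰 : Finset (Set X)) : Set ℕ :=
  {n : ℕ | 0 < n ∧ ∀ U ∈ 𝒰, ¬ g^[n] '' V ⊆ U}

/-- Hausdorff sensitivity of `(X, f_{1,∞})`. -/
def HSensitive {X : Type*} [TopologicalSpace X] (f : ℕ → X → X) : Prop :=
  ∃ 𝒰 : Finset (Set X), IsFinOpenCover 𝒰 ∧
    ∀ V : Set X, IsOpen V → V.Nonempty → (HNSet f V 𝒰).Nonempty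

/-- Hausdorff sensitivity of the autonomous system `(X, g)`. -/
def HSensitiveAut {X : Type*} [TopologicalSpace X] (g : X → X) : Prop :=
  ∃ 𝒰 : Finset (Set X), IsFinOpenCover 𝒰 ∧
    ∀ V : Set X, IsOpen V → V.Nonempty → (HNSetAut g V 𝒰).Nonempty

/-- Thick Hausdorff sensitivity of `(X, f_{1,∞})`. -/
def ThickHSensitive {X : Type*} [TopologicalSpace X] (f : ℕ → X → X) : Prop :=
  ∃ 𝒰 : Finset (Set X), IsFinOpenCover 𝒰 ∧
    ∀ V : Set X, IsOpen V → V.Nonempty → Thick (HNSet f V 𝒰)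

/-- Thick Hausdorff sensitivity of the autonomous system `(X, g)`. -/
def ThickHSensitiveAut {X : Type*} [TopologicalSpace X] (g : X → X) : Prop :=
  ∃ 𝒰 : Finset (Set X), IsFinOpenCover 𝒰 ∧
    ∀ V : Set X, IsOpen V → V.Nonempty → Thick (HNSetAut g V 𝒰)

/-- Multi-Hausdorff sensitivity of the autonomous system `(X, g)`. -/
def MultiHSensitiveAut {X : Type*} [TopologicalSpace X] (g : X → X) : Prop :=
  ∃ 𝒰 : Finset (Set X), IsFinOpenCover 𝒰 ∧
    ∀ (m : ℕ) (V : Fin (m + 1) → Set X),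
      (∀ i, IsOpen (V i)) → (∀ i, (V i).Nonempty) → (⋂ i, HNSetAut g (V i) 𝒰).Nonempty

/-!
Fix an entourage `D`. If the system is not eventually sensitive, some point has an orbit that is
uniformly stable up to `D`; by total boundedness this orbit has only finitely many itineraries up to
`D`. The dense orbit of `x₀` enters the stability neighbourhood and shadows the stable orbit from
then on, so its points also have finitely many itineraries, up to `D ○ D`. The set of points whose
itinerary stays close to a given one, up to a closed entourage, is closed; hence finitely many such
sets cover not only the orbit of `x₀` but all of `X`. The points near `x` lie only in those sets
that contain `x`, so their itineraries are close to that of `x`: this is equicontinuity at `x`.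
-/

section Itineraries

open scoped UniformConvergence

variable {ι X Y : Type*} {F : ι → X → Y}

theorem apply_iterate_of_shift {g : X → X} {σ : ι → ι} (hσ : ∀ i z, F i (g z) = F (σ i) z)
    (l : ℕ) (i : ι) (z : X) : F i (g^[l] z) = F (σ^[l] i) z := by
  induction l generalizing i with
  | zero => rfl
  | succ l ih => rw [Function.iterate_succ_apply', hσ, ih, Function.iterate_succ_apply]

/-- The itinerary `i ↦ F i x` of a point under a family of maps. It takes values in `ι →ᵤ Y`, so
that two itineraries are close when they are close at all times simultaneously. -/
def itinerary (F : ι → X → Y) (x : X) : ι →ᵤ Y :=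
  UniformFun.ofFun fun i => F i x

/-- The `g`-orbit of `x` is stable up to `D` for the family `F`: all its points admit a common
entourage within which itineraries stay `D`-close. This is what the failure of eventual sensitivity
with entourage `D` provides. -/
def StableOrbit [UniformSpace X] (F : ι → X → Y) (g : X → X) (D : Set (Y × Y)) (x : X) : Prop :=
  ∃ E ∈ 𝓤 X, ∀ q y, (g^[q] x, y) ∈ E → ∀ i, (F i (g^[q] x), F i y) ∈ D

variable [UniformSpace Y]

theorem totallyBounded_image_itinerary_iff {s : Set X} :
    TotallyBounded (itinerary F '' s) ↔
      ∀ D ∈ 𝓤 Y, ∃ t : Set (ι → Y), t.Finite ∧ ∀ x ∈ s, ∃ u ∈ t, ∀ i, (F i x, u i) ∈ D := by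
  simp only [(UniformFun.hasBasis_uniformity ι Y).totallyBounded_iff, subset_def,
    forall_mem_image, mem_iUnion₂, exists_prop]
  rfl

theorem isClosed_setOf_forall_mem [TopologicalSpace X] (hF : ∀ i, Continuous (F i))
    {D : Set (Y × Y)} (hD : IsClosed D) (u : ι → Y) :
    IsClosed {x | ∀ i, (F i x, u i) ∈ D} := by
  simp only [ofPred_forall]
  exact isClosed_iInter fun i => hD.preimage ((hF i).prodMk continuous_const)

theorem equicontinuous_of_totallyBounded_image_itinerary [TopologicalSpace X]
    (hF : ∀ i, Continuous (F i)) {s : Set X} (hs : Dense s)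
    (hFs : TotallyBounded (itinerary F '' s)) : Equicontinuous F := by
  intro x U hU
  obtain ⟨V, hV, hVsymm, hVU⟩ := comp_symm_mem_uniformity_sets hU
  obtain ⟨D, ⟨hD, hDclosed⟩, hDV⟩ := uniformity_hasBasis_closed.mem_iff.1 hV
  obtain ⟨t, ht, hst⟩ := totallyBounded_image_itinerary_iff.1 hFs D hD
  let piece (u : ι → Y) : Set X := {x | ∀ i, (F i x, u i) ∈ D}
  have hpiece (u) : IsClosed (piece u) := isClosed_setOf_forall_mem hF hDclosed u
  have hcover (y) : y ∈ ⋃ u ∈ t, piece u :=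
    closure_minimal (fun z hz => mem_iUnion₂.2 (by simpa [piece] using hst z hz))
      (ht.isClosed_biUnion fun u _ => hpiece u) (hs y)
  have : Finite t := ht
  filter_upwards [(locallyFinite_of_finite fun u : t => piece u).eventually_subset
    (fun u => hpiece u) x] with y hyx i
  obtain ⟨u, hut, hyu⟩ := mem_iUnion₂.1 (hcover y)
  have hxu : x ∈ piece u := hyx (a := ⟨u, hut⟩) hyu
  exact hVU ⟨u i, hDV (hxu i), hVsymm.symm _ _ (hDV (hyu i))⟩

theorem totallyBounded_image_itinerary_orbit [UniformSpace X]
    (hX : TotallyBounded (univ : Set X)) {g : X → X} {σ : ι → ι}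
    (hσ : ∀ i z, F i (g z) = F (σ i) z) (hstable : ∀ D ∈ 𝓤 Y, ∃ x, StableOrbit F g D x)
    {x₀ : X} (hx₀ : TransPtAut g x₀) :
    TotallyBounded (itinerary F '' range fun n => g^[n] x₀) := by
  rw [totallyBounded_image_itinerary_iff]
  intro D hD
  obtain ⟨V, hV, hVsymm, hVD⟩ := comp_symm_mem_uniformity_sets hD
  obtain ⟨x, E, hE, hxE⟩ := hstable V hV
  obtain ⟨_, ⟨m, rfl⟩, hmE⟩ := hx₀.inter_nhds_nonempty (mem_nhds_left x hE)
  have hshadow (j i) : (F i (g^[j] x), F i (g^[j] (g^[m] x₀))) ∈ V := by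
    rw [apply_iterate_of_shift hσ, apply_iterate_of_shift hσ]
    exact hxE 0 _ hmE (σ^[j] i)
  obtain ⟨t, ht, hXt⟩ := hX E hE
  refine ⟨(fun y i => F i y) '' (t ∪ (fun n => g^[n] x₀) '' Iio m),
    (ht.union ((finite_Iio m).image _)).image _, ?_⟩
  rintro _ ⟨n, rfl⟩
  rcases lt_or_ge n m with hnm | hmn
  · exact ⟨_, mem_image_of_mem _ (.inr (mem_image_of_mem _ hnm)),
      fun i => refl_mem_uniformity hD⟩
  · obtain ⟨j, rfl⟩ := Nat.exists_eq_add_of_le' hmn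
    obtain ⟨y, hyt, hjy⟩ := mem_iUnion₂.1 (hXt (mem_univ (g^[j] x)))
    refine ⟨_, mem_image_of_mem _ (.inl hyt), fun i => hVD ⟨F i (g^[j] x), ?_, hxE j y hjy i⟩⟩
    simpa only [Function.iterate_add_apply] using hVsymm.symm _ _ (hshadow j i)

theorem equicontinuous_of_forall_exists_stableOrbit [UniformSpace X]
    (hX : TotallyBounded (univ : Set X)) (hF : ∀ i, Continuous (F i)) {g : X → X} {σ : ι → ι}
    (hσ : ∀ i z, F i (g z) = F (σ i) z) {x₀ : X} (hx₀ : TransPtAut g x₀)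
    (hstable : ∀ D ∈ 𝓤 Y, ∃ x, StableOrbit F g D x) : Equicontinuous F :=
  equicontinuous_of_totallyBounded_image_itinerary hF hx₀
    (totallyBounded_image_itinerary_orbit hX hσ hstable hx₀)

end Itineraries

section Traj

variable {X : Type*} {f : ℕ → X → X} {p : ℕ}

theorem continuous_traj [TopologicalSpace X] (hf : ∀ n, Continuous (f n)) (n : ℕ) :
    Continuous (traj f n) := by
  induction n with
  | zero => exact continuous_id
  | succ n ih => exact (hf _).comp ih

theorem traj_apply_traj_period (hper : PeriodicFam f p) (n : ℕ) (x : X) :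
    traj f n (traj f p x) = traj f (n + p) x := by
  induction n with
  | zero => simp only [traj, id, zero_add]
  | succ n ih =>
    rw [Nat.add_right_comm]
    simp only [traj, Function.comp_apply, ih]
    rw [Nat.add_right_comm, hper]

theorem traj_apply_iterate_period (hper : PeriodicFam f p) (n q : ℕ) (x : X) :
    traj f n ((traj f p)^[q] x) = traj f (n + q * p) x := by
  rw [apply_iterate_of_shift (traj_apply_traj_period hper), add_right_iterate_apply, smul_eq_mul]

theorem iterate_traj_period (hper : PeriodicFam f p) (q : ℕ) (x : X) :
    (traj f p)^[q] x = traj f (q * p) x := by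
  simpa only [traj, id, zero_add] using traj_apply_iterate_period hper 0 q x

variable [UniformSpace X]

theorem eqPt_iff_equicontinuousAt {x : X} : EqPt f x ↔ EquicontinuousAt (traj f) x := by
  refine forall₂_congr fun E _ => ?_
  rw [Filter.Eventually, UniformSpace.mem_nhds_iff]
  rfl

theorem exists_stableOrbit_of_not_evSensitive (hp : 0 < p) (hper : PeriodicFam f p)
    (hns : ¬ EvSensitive f) {D : Set (X × X)} (hD : D ∈ 𝓤 X) :
    ∃ x, StableOrbit (traj f) (traj f p) D x := by
  simp only [EvSensitive, EvSensitiveWith, not_exists, not_and, not_forall, not_not] at hns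
  obtain ⟨x, E, hE, hxE⟩ := hns D hD
  -- Eventual sensitivity only sees positive times, so start at `traj f p x` and treat time `0` by
  -- shrinking `E` to `E ∩ D`.
  refine ⟨traj f p x, E ∩ D, inter_mem hE hD, fun q y hy n => ?_⟩
  rcases n.eq_zero_or_pos with rfl | hn
  · exact hy.2
  · rw [← Function.iterate_succ_apply] at hy ⊢
    rw [iterate_traj_period hper] at hy
    rw [traj_apply_iterate_period hper, add_comm]
    exact hxE _ n (by positivity) hn y hy.1

theorem equicontinuous_or_eventuallySensitive_general (hX : TotallyBounded (univ : Set X))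
    (hf : ∀ n, Continuous (f n)) (hp : 0 < p) (hper : PeriodicFam f p)
    (htrans : ∃ x, TransPtAut (traj f p) x) :
    (∀ x : X, EqPt f x) ∨ EvSensitive f := by
  refine or_iff_not_imp_right.2 fun hns x => eqPt_iff_equicontinuousAt.2 ?_
  obtain ⟨x₀, hx₀⟩ := htrans
  exact equicontinuous_of_forall_exists_stableOrbit hX (continuous_traj hf)
    (traj_apply_traj_period hper) hx₀
    (fun _ hD => exists_stableOrbit_of_not_evSensitive hp hper hns hD) x

end Traj

theorem equicontinuous_or_eventuallySensitive {X : Type*} [UniformSpace X] [CompactSpace X]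
    [T2Space X]
    (f : ℕ → X → X) (hf : ∀ n, Continuous (f n))
    (p : ℕ) (hp : 0 < p) (hper : PeriodicFam f p)
    (htrans : ∃ x, TransPtAut (traj f p) x) :
    (∀ x : X, EqPt f x) ∨ EvSensitive f := by
  exact equicontinuous_or_eventuallySensitive_general isCompact_univ.totallyBounded hf hp hper
    htrans
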